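/- Fix a conditional pmf r on 𝒳̂ⁿ given 𝒳ⁿ. For any pmfs p₀, p₁, …, p_{k−1} on 𝒳ⁿ and p = (1/k)·Σ_{i=0}^{k−1} pᵢ, the directed information is superadditive with respect to this mixture: I_p(X̂ⁿ→Xⁿ) ≥ (1/k)·Σ_{i=0}^{k−1} I_{pᵢ}(X̂ⁿ→Xⁿ), where for a source pmf w on 𝒳ⁿ, I_w(X̂ⁿ→Xⁿ) denotes the directed information computed from w, r and the causal conditioning pmf induced by the joint w·r. -/

import Mathlib

open scoped BigOperators
open Filter

noncomputable section

namespace FFRD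

variable {X Y : Type} [Fintype X] [DecidableEq X] [Fintype Y] [DecidableEq Y] {n : ℕ}

/-- `p` is a probability mass function on a finite type. -/
def IsPMF {α : Type} [Fintype α] (p : α → ℝ) : Prop :=
  (∀ a, 0 ≤ p a) ∧ ∑ a, p a = 1

/-- `r` is a conditional pmf on `Fin n → Y` given `Fin n → X`. -/
def IsCondPMF (r : (Fin n → X) → (Fin n → Y) → ℝ) : Prop :=
  (∀ x y, 0 ≤ r x y) ∧ ∀ x, ∑ y, r x y = 1

/-- The causal conditioning pmf `q_r(ŷⁿ‖x^{n-1})` induced by the joint pmf `p(x)·r(y|x)`: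
the product over `i` of the conditional probabilities `P(y_i | y^{i-1}, x^{i-1})`. -/
def causalCond (p : (Fin n → X) → ℝ) (r : (Fin n → X) → (Fin n → Y) → ℝ)
    (x : Fin n → X) (y : Fin n → Y) : ℝ :=
  ∏ i : Fin n,
    ((∑ x' : Fin n → X, ∑ y' : Fin n → Y,
        if (∀ j, j < i → x' j = x j) ∧ (∀ j, j ≤ i → y' j = y j)
        then p x' * r x' y' else 0) /
      (∑ x' : Fin n → X, ∑ y' : Fin n → Y,
        if (∀ j, j < i → x' j = x j) ∧ (∀ j, j < i → y' j = y j)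
        then p x' * r x' y' else 0))

/-- Directed information `I(X̂ⁿ → Xⁿ)` computed from source pmf `p` and conditional pmf `r`. -/
def directedInfo (p : (Fin n → X) → ℝ) (r : (Fin n → X) → (Fin n → Y) → ℝ) : ℝ :=
  ∑ x, ∑ y, p x * r x y * Real.logb 2 (r x y / causalCond p r x y)

/-- The `n`-th order rate distortion function with feed-forward. -/
def Rn (n : ℕ) (p : (Fin n → X) → ℝ) (d : (Fin n → X) → (Fin n → Y) → ℝ) (D : ℝ) : ℝ :=
  (1 / (n : ℝ)) *
    sInf {v | ∃ r : (Fin n → X) → (Fin n → Y) → ℝ, IsCondPMF r ∧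
      (∑ x, ∑ y, p x * r x y * d x y) ≤ D ∧ v = directedInfo p r}

/-- Left shift on sequences. -/
def shift (X : Type) : (ℕ → X) → (ℕ → X) := fun ω k => ω (k + 1)

/-- The law of the first `n` coordinates under `μ`. -/
def lawFin [MeasurableSpace X] (μ : MeasureTheory.Measure (ℕ → X)) (n : ℕ)
    (x : Fin n → X) : ℝ :=
  (μ {ω | ∀ i : Fin n, ω (i : ℕ) = x i}).toReal

/-- Per-letter distortion extended to blocks of length `L`. -/
def dBlock (d0 : X → Y → ℝ) (L : ℕ) (x : Fin L → X) (y : Fin L → Y) : ℝ :=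
  (1 / (L : ℝ)) * ∑ i, d0 (x i) (y i)

end FFRD

/-!
Scoring a source `w` against the causal conditioning pmf `q_v` of a second source `v` gives the
functional `(w, v) ↦ ∑ w·r·log₂ (r / q_v)`, which is linear in `w` and equals `I_w` at `v = w`.
Each factor of `q_v` is a conditional probability, so Gibbs' inequality, applied factor by factor,
shows that `v = w` minimizes this functional over all `v` that dominate `w`. A mixture `p` dominates
each of its components, so choosing `v = p` and forming the weighted sum over the
components gives the claim.
-/

namespace FFRD

section Marginal

variable {Ω α β : Type*} [Fintype Ω]

/-- The mass function of `f` under the mass function `J`, that is, the pushforward of `J` along `f`.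
Masses are not required to be normalized. -/
def marginal [DecidableEq α] (f : Ω → α) (J : Ω → ℝ) (a : α) : ℝ :=
  ∑ w with f w = a, J w

lemma marginal_nonneg [DecidableEq α] {J : Ω → ℝ} (hJ : ∀ w, 0 ≤ J w) (f : Ω → α) (a : α) :
    0 ≤ marginal f J a :=
  Finset.sum_nonneg fun w _ => hJ w

lemma marginal_pos_iff [DecidableEq α] {J : Ω → ℝ} (hJ : ∀ w, 0 ≤ J w) {f : Ω → α} {a : α} :
    0 < marginal f J a ↔ ∃ w, f w = a ∧ 0 < J w := by
  simp [marginal, Finset.sum_pos_iff_of_nonneg fun w _ => hJ w]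

lemma marginal_apply_pos [DecidableEq α] {J : Ω → ℝ} (hJ : ∀ w, 0 ≤ J w) (f : Ω → α) {w : Ω}
    (hw : 0 < J w) : 0 < marginal f J (f w) :=
  (marginal_pos_iff hJ).2 ⟨w, rfl, hw⟩

lemma marginal_pos_of_dominated [DecidableEq α] {J K : Ω → ℝ} (hJ : ∀ w, 0 ≤ J w)
    (hK : ∀ w, 0 ≤ K w) (hJK : ∀ w, 0 < J w → 0 < K w) {f : Ω → α} {a : α}
    (ha : 0 < marginal f J a) : 0 < marginal f K a := by
  obtain ⟨w, rfl, hw⟩ := (marginal_pos_iff hJ).1 ha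
  exact marginal_apply_pos hK f (hJK w hw)

lemma sum_marginal_mul [Fintype α] [DecidableEq α] (f : Ω → α) (J : Ω → ℝ) (φ : α → ℝ) :
    ∑ a, marginal f J a * φ a = ∑ w, J w * φ (f w) := by
  rw [← Finset.sum_fiberwise Finset.univ f]
  refine Finset.sum_congr rfl fun a _ => ?_
  rw [marginal, Finset.sum_mul]
  exact Finset.sum_congr rfl fun w hw => by rw [(Finset.mem_filter.1 hw).2]

lemma marginal_marginal [Fintype α] [DecidableEq α] [DecidableEq β] (g : α → β) (f : Ω → α)
    (J : Ω → ℝ) : marginal g (marginal f J) = marginal (g ∘ f) J := by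
  ext b
  simpa [marginal, Finset.sum_filter] using
    sum_marginal_mul f J fun a => if g a = b then 1 else 0

end Marginal

section Gibbs

variable {α β : Type*} [Fintype α]

lemma mul_log_sub_mul_log_le {s t : ℝ} (hs : 0 ≤ s) (ht : 0 ≤ t) (hst : 0 < s → 0 < t) :
    s * Real.log t - s * Real.log s ≤ t - s := by
  obtain rfl | hs_pos := hs.eq_or_lt
  · simpa using ht
  calc s * Real.log t - s * Real.log s = s * Real.log (t / s) := by
        rw [Real.log_div (hst hs_pos).ne' hs_pos.ne', mul_sub]
    _ ≤ s * (t / s - 1) := by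
        gcongr
        exact Real.log_le_sub_one_of_pos (div_pos (hst hs_pos) hs_pos)
    _ = t - s := by field_simp

lemma sum_mul_log_le_sum_mul_log {P Q : α → ℝ} (hP : ∀ a, 0 ≤ P a) (hQ : ∀ a, 0 ≤ Q a)
    (hPQ : ∀ a, 0 < P a → 0 < Q a) (hsum : ∑ a, Q a ≤ ∑ a, P a) :
    ∑ a, P a * Real.log (Q a) ≤ ∑ a, P a * Real.log (P a) := by
  have hle := Finset.sum_le_sum fun a (_ : a ∈ Finset.univ) =>
    mul_log_sub_mul_log_le (hP a) (hQ a) (hPQ a)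
  rw [Finset.sum_sub_distrib, Finset.sum_sub_distrib] at hle
  linarith

variable [DecidableEq β]

/-- The conditional mass of `a` given the value `g a` of the statistic `g`, under the mass function
`J`. It is `0` where that value has mass `0`. -/
def condMass (g : α → β) (J : α → ℝ) (a : α) : ℝ :=
  J a / marginal g J (g a)

lemma condMass_nonneg {J : α → ℝ} (hJ : ∀ a, 0 ≤ J a) (g : α → β) (a : α) :
    0 ≤ condMass g J a :=
  div_nonneg (hJ a) (marginal_nonneg hJ g _)

lemma condMass_pos {J : α → ℝ} (hJ : ∀ a, 0 ≤ J a) (g : α → β) {a : α} (ha : 0 < J a) :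
    0 < condMass g J a :=
  div_pos ha (marginal_apply_pos hJ g ha)

lemma sum_condMass_fiber_le_one (g : α → β) (K : α → ℝ) (b : β) :
    ∑ a with g a = b, condMass g K a ≤ 1 :=
  calc ∑ a with g a = b, condMass g K a
      = ∑ a with g a = b, K a / marginal g K b :=
        Finset.sum_congr rfl fun a ha => by rw [condMass, (Finset.mem_filter.1 ha).2]
    _ = marginal g K b / marginal g K b := (Finset.sum_div _ _ _).symm
    _ ≤ 1 := div_self_le_one _

lemma sum_marginal_mul_condMass_le {J : α → ℝ} (hJ : ∀ a, 0 ≤ J a) (g : α → β) (K : α → ℝ) :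
    ∑ a, marginal g J (g a) * condMass g K a ≤ ∑ a, J a :=
  calc ∑ a, marginal g J (g a) * condMass g K a
      = ∑ a, ∑ a' with g a' = g a, J a' * condMass g K a := by
        simp only [marginal, Finset.sum_mul]
    _ = ∑ a', ∑ a with g a = g a', J a' * condMass g K a :=
        Finset.sum_comm' fun a a' => by simp [eq_comm]
    _ = ∑ a', J a' * ∑ a with g a = g a', condMass g K a := by simp only [Finset.mul_sum]
    _ ≤ ∑ a', J a' := Finset.sum_le_sum fun a' _ =>
        mul_le_of_le_one_right (hJ a') (sum_condMass_fiber_le_one g K _)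

-- Gibbs' inequality for `J` against the mass function with the `g`-marginal of `J` and the
-- conditional masses of `K`; the common marginal cancels.
lemma sum_mul_log_condMass_le (g : α → β) {J K : α → ℝ} (hJ : ∀ a, 0 ≤ J a)
    (hK : ∀ a, 0 ≤ K a) (hJK : ∀ a, 0 < J a → 0 < K a) :
    ∑ a, J a * Real.log (condMass g K a) ≤ ∑ a, J a * Real.log (condMass g J a) := by
  let N := marginal g J
  have hN : ∀ b, 0 ≤ N b := marginal_nonneg hJ g
  have hN_pos : ∀ a, 0 < J a → 0 < N (g a) := fun a ha => marginal_apply_pos hJ g ha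
  have hgibbs : ∑ a, J a * Real.log (N (g a) * condMass g K a) ≤ ∑ a, J a * Real.log (J a) :=
    sum_mul_log_le_sum_mul_log hJ (fun a => mul_nonneg (hN _) (condMass_nonneg hK g a))
      (fun a ha => mul_pos (hN_pos a ha) (condMass_pos hK g (hJK a ha)))
      (sum_marginal_mul_condMass_le hJ g K)
  have hlog_K : ∀ a, J a * Real.log (condMass g K a)
      = J a * Real.log (N (g a) * condMass g K a) - J a * Real.log (N (g a)) := fun a => by
    obtain ha | ha := (hJ a).eq_or_lt
    · simp [← ha]
    · rw [Real.log_mul (hN_pos a ha).ne' (condMass_pos hK g (hJK a ha)).ne']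
      ring
  have hlog_J : ∀ a, J a * Real.log (condMass g J a)
      = J a * Real.log (J a) - J a * Real.log (N (g a)) := fun a => by
    obtain ha | ha := (hJ a).eq_or_lt
    · simp [← ha]
    · rw [condMass, Real.log_div ha.ne' (hN_pos a ha).ne', mul_sub]
  simp only [hlog_K, hlog_J, Finset.sum_sub_distrib]
  exact sub_le_sub_right hgibbs _

end Gibbs

section CausalConditioning

variable {X Y : Type} {n : ℕ}

/-- The joint mass function `p(xⁿ) r(x̂ⁿ|xⁿ)` of source and reconstruction. -/
def joint (p : (Fin n → X) → ℝ) (r : (Fin n → X) → (Fin n → Y) → ℝ)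
    (w : (Fin n → X) × (Fin n → Y)) : ℝ :=
  p w.1 * r w.1 w.2

/-- The pair `(x^{i-1}, x̂^i)`: the reconstruction symbol at time `i` together with everything it is
conditioned on. -/
def history (i : Fin n) (w : (Fin n → X) × (Fin n → Y)) :
    (Finset.Iio i → X) × (Finset.Iic i → Y) :=
  ((Finset.Iio i).restrict w.1, (Finset.Iic i).restrict w.2)

/-- The pair `(x^{i-1}, x̂^{i-1})` obtained from `(x^{i-1}, x̂^i)` by forgetting the current
reconstruction symbol. -/
def dropCurrent (i : Fin n) (h : (Finset.Iio i → X) × (Finset.Iic i → Y)) :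
    (Finset.Iio i → X) × (Finset.Iio i → Y) :=
  (h.1, Finset.restrict₂ (π := fun _ => Y) Finset.Iio_subset_Iic_self h.2)

lemma joint_nonneg {p : (Fin n → X) → ℝ} {r : (Fin n → X) → (Fin n → Y) → ℝ}
    (hp : ∀ x, 0 ≤ p x) (hr : ∀ x y, 0 ≤ r x y) (w : (Fin n → X) × (Fin n → Y)) :
    0 ≤ joint p r w :=
  mul_nonneg (hp _) (hr _ _)

lemma joint_pos_of_dominated {p v : (Fin n → X) → ℝ} {r : (Fin n → X) → (Fin n → Y) → ℝ}
    (hp : ∀ x, 0 ≤ p x) (hpv : ∀ x, 0 < p x → 0 < v x) {w : (Fin n → X) × (Fin n → Y)}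
    (hw : 0 < joint p r w) : 0 < joint v r w := by
  have hp_pos : 0 < p w.1 := (hp _).lt_of_ne' (left_ne_zero_of_mul hw.ne')
  exact mul_pos (hpv _ hp_pos) (pos_of_mul_pos_right hw hp_pos.le)

lemma history_eq_history_iff {i : Fin n} {w w' : (Fin n → X) × (Fin n → Y)} :
    history i w' = history i w ↔
      (∀ j, j < i → w'.1 j = w.1 j) ∧ ∀ j, j ≤ i → w'.2 j = w.2 j := by
  simp [history, funext_iff]

lemma dropCurrent_history_eq_iff {i : Fin n} {w w' : (Fin n → X) × (Fin n → Y)} :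
    dropCurrent i (history i w') = dropCurrent i (history i w) ↔
      (∀ j, j < i → w'.1 j = w.1 j) ∧ ∀ j, j < i → w'.2 j = w.2 j := by
  simp [history, dropCurrent, funext_iff]

variable [Fintype X] [DecidableEq X] [Fintype Y] [DecidableEq Y]

lemma causalCond_eq_prod_condMass (p : (Fin n → X) → ℝ) (r : (Fin n → X) → (Fin n → Y) → ℝ)
    (w : (Fin n → X) × (Fin n → Y)) :
    causalCond p r w.1 w.2 =
      ∏ i, condMass (dropCurrent i) (marginal (history i) (joint p r)) (history i w) := by
  refine Finset.prod_congr rfl fun i _ => ?_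
  simp only [condMass, marginal_marginal]
  simp only [marginal, Function.comp_apply, history_eq_history_iff, dropCurrent_history_eq_iff,
    Finset.sum_filter, Fintype.sum_prod_type, joint]

lemma condMass_history_pos {J : (Fin n → X) × (Fin n → Y) → ℝ} (hJ : ∀ w, 0 ≤ J w) (i : Fin n)
    {w : (Fin n → X) × (Fin n → Y)} (hw : 0 < J w) :
    0 < condMass (dropCurrent i) (marginal (history i) J) (history i w) :=
  condMass_pos (marginal_nonneg hJ _) _ (marginal_apply_pos hJ _ hw)

lemma causalCond_pos {p : (Fin n → X) → ℝ} {r : (Fin n → X) → (Fin n → Y) → ℝ}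
    (hJ : ∀ w, 0 ≤ joint p r w) {w : (Fin n → X) × (Fin n → Y)} (hw : 0 < joint p r w) :
    0 < causalCond p r w.1 w.2 := by
  rw [causalCond_eq_prod_condMass]
  exact Finset.prod_pos fun i _ => condMass_history_pos hJ i hw

lemma sum_mul_log_causalCond_eq {J : (Fin n → X) × (Fin n → Y) → ℝ} (hJ : ∀ w, 0 ≤ J w)
    {v : (Fin n → X) → ℝ} {r : (Fin n → X) → (Fin n → Y) → ℝ} (hv : ∀ w, 0 ≤ joint v r w)
    (hJv : ∀ w, 0 < J w → 0 < joint v r w) :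
    ∑ w, J w * Real.log (causalCond v r w.1 w.2) =
      ∑ i, ∑ h, marginal (history i) J h *
        Real.log (condMass (dropCurrent i) (marginal (history i) (joint v r)) h) := by
  simp only [sum_marginal_mul]
  rw [Finset.sum_comm]
  refine Finset.sum_congr rfl fun w _ => ?_
  obtain hw | hw := (hJ w).eq_or_lt
  · simp [← hw]
  · rw [causalCond_eq_prod_condMass,
      Real.log_prod fun i _ => (condMass_history_pos hv i (hJv w hw)).ne', Finset.mul_sum]

lemma sum_joint_mul_log_causalCond_le {p v : (Fin n → X) → ℝ}
    {r : (Fin n → X) → (Fin n → Y) → ℝ} (hp : ∀ w, 0 ≤ joint p r w) (hv : ∀ w, 0 ≤ joint v r w)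
    (hpv : ∀ w, 0 < joint p r w → 0 < joint v r w) :
    ∑ w, joint p r w * Real.log (causalCond v r w.1 w.2) ≤
      ∑ w, joint p r w * Real.log (causalCond p r w.1 w.2) := by
  rw [sum_mul_log_causalCond_eq hp hv hpv, sum_mul_log_causalCond_eq hp hp fun _ => id]
  exact Finset.sum_le_sum fun i _ => sum_mul_log_condMass_le _ (marginal_nonneg hp _)
    (marginal_nonneg hv _) fun _ => marginal_pos_of_dominated hp hv hpv

end CausalConditioning

section CrossDirectedInfo

variable {X Y : Type} [Fintype X] [DecidableEq X] [Fintype Y] [DecidableEq Y] {n : ℕ}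

/-- The directed information of the source `p` computed with the causal conditioning mass function
induced by another source `v`, as a cross entropy is to an entropy. -/
def crossDirectedInfo (p v : (Fin n → X) → ℝ) (r : (Fin n → X) → (Fin n → Y) → ℝ) : ℝ :=
  ∑ x, ∑ y, p x * r x y * Real.logb 2 (r x y / causalCond v r x y)

lemma crossDirectedInfo_self (p : (Fin n → X) → ℝ) (r : (Fin n → X) → (Fin n → Y) → ℝ) :
    crossDirectedInfo p p r = directedInfo p r :=
  rfl

lemma crossDirectedInfo_sum {ι : Type*} (s : Finset ι) (c : ι → ℝ) (pv : ι → (Fin n → X) → ℝ)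
    (v : (Fin n → X) → ℝ) (r : (Fin n → X) → (Fin n → Y) → ℝ) :
    crossDirectedInfo (fun x => ∑ i ∈ s, c i * pv i x) v r =
      ∑ i ∈ s, c i * crossDirectedInfo (pv i) v r := by
  simp only [crossDirectedInfo, Finset.mul_sum, Finset.sum_mul]
  rw [Finset.sum_comm (s := s)]
  refine Finset.sum_congr rfl fun x _ => ?_
  rw [Finset.sum_comm]
  simp only [mul_assoc]

lemma crossDirectedInfo_eq_sub {p v : (Fin n → X) → ℝ} {r : (Fin n → X) → (Fin n → Y) → ℝ}
    (hp : ∀ w, 0 ≤ joint p r w) (hv : ∀ w, 0 ≤ joint v r w)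
    (hpv : ∀ w, 0 < joint p r w → 0 < joint v r w) :
    crossDirectedInfo p v r =
      (∑ w, joint p r w * Real.log (r w.1 w.2) -
        ∑ w, joint p r w * Real.log (causalCond v r w.1 w.2)) / Real.log 2 := by
  rw [crossDirectedInfo, ← Fintype.sum_prod_type', ← Finset.sum_sub_distrib, Finset.sum_div]
  refine Finset.sum_congr rfl fun w _ => ?_
  change joint p r w * _ = _
  obtain hw | hw := (hp w).eq_or_lt
  · simp [← hw]
  · have hr_ne : r w.1 w.2 ≠ 0 := right_ne_zero_of_mul hw.ne'
    rw [Real.logb, Real.log_div hr_ne (causalCond_pos hv (hpv w hw)).ne']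
    ring

lemma directedInfo_le_crossDirectedInfo {p v : (Fin n → X) → ℝ}
    {r : (Fin n → X) → (Fin n → Y) → ℝ} (hr : ∀ x y, 0 ≤ r x y) (hp : ∀ x, 0 ≤ p x)
    (hv : ∀ x, 0 ≤ v x) (hpv : ∀ x, 0 < p x → 0 < v x) :
    directedInfo p r ≤ crossDirectedInfo p v r := by
  have hJp := joint_nonneg hp hr
  have hJv := joint_nonneg hv hr
  have hJpv : ∀ w, 0 < joint p r w → 0 < joint v r w := fun _ => joint_pos_of_dominated hp hpv
  rw [← crossDirectedInfo_self, crossDirectedInfo_eq_sub hJp hJp fun _ => id,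
    crossDirectedInfo_eq_sub hJp hJv hJpv]
  refine div_le_div_of_nonneg_right (sub_le_sub_left ?_ _) (Real.log_nonneg one_le_two)
  exact sum_joint_mul_log_causalCond_le hJp hJv hJpv

end CrossDirectedInfo

end FFRD

open FFRD in
theorem directedInfo_superadditive_mixture_general
    {X Y : Type} [Fintype X] [DecidableEq X] [Fintype Y] [DecidableEq Y] {n : ℕ}
    {r : (Fin n → X) → (Fin n → Y) → ℝ} (hr : ∀ x y, 0 ≤ r x y)
    {ι : Type*} {s : Finset ι} {c : ι → ℝ} (hc : ∀ i ∈ s, 0 ≤ c i)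
    {pv : ι → (Fin n → X) → ℝ} (hpv : ∀ i ∈ s, ∀ x, 0 ≤ pv i x) :
    ∑ i ∈ s, c i * directedInfo (pv i) r ≤ directedInfo (fun x => ∑ i ∈ s, c i * pv i x) r := by
  set p : (Fin n → X) → ℝ := fun x => ∑ i ∈ s, c i * pv i x with hp_def
  have hterm : ∀ x, ∀ i ∈ s, 0 ≤ c i * pv i x := fun x i hi => mul_nonneg (hc i hi) (hpv i hi x)
  have hp : ∀ x, 0 ≤ p x := fun x => Finset.sum_nonneg (hterm x)
  have hdom : ∀ i ∈ s, 0 < c i → ∀ x, 0 < pv i x → 0 < p x := fun i hi hci x hx =>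
    Finset.sum_pos' (hterm x) ⟨i, hi, mul_pos hci hx⟩
  rw [← crossDirectedInfo_self p, hp_def, crossDirectedInfo_sum, ← hp_def]
  refine Finset.sum_le_sum fun i hi => ?_
  obtain hci | hci := (hc i hi).eq_or_lt
  · simp [← hci]
  · gcongr
    exact directedInfo_le_crossDirectedInfo hr (hpv i hi) hp (hdom i hi hci)

open FFRD in
/-- for a fixed conditional pmf `r`, the directed information is convex in
the source pmf: for any pmfs `p₀,…,p_{k−1}` and their uniform mixture `p`,
`I_p(X̂ⁿ→Xⁿ) ≥ (1/k)·Σᵢ I_{pᵢ}(X̂ⁿ→Xⁿ)`. -/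
theorem directedInfo_superadditive_mixture
    {X Y : Type} [Fintype X] [DecidableEq X] [Fintype Y] [DecidableEq Y]
    (n : ℕ) (k : ℕ) (hk : 1 ≤ k)
    (r : (Fin n → X) → (Fin n → Y) → ℝ) (hr : IsCondPMF r)
    (pv : Fin k → (Fin n → X) → ℝ) (hpv : ∀ i, IsPMF (pv i))
    (p : (Fin n → X) → ℝ)
    (hp : ∀ x, p x = (1 / (k : ℝ)) * ∑ i : Fin k, pv i x) :
    directedInfo p r ≥ (1 / (k : ℝ)) * ∑ i : Fin k, directedInfo (pv i) r := by
  obtain rfl : p = fun x => ∑ i, 1 / (k : ℝ) * pv i x := by simp only [← Finset.mul_sum, ← hp]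
  rw [ge_iff_le, Finset.mul_sum]
  exact directedInfo_superadditive_mixture_general hr.1 (fun _ _ => by positivity)
    fun i _ => (hpv i).1
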